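/- For all integers n > n′ ≥ 1, a single object O of type 𝒯_{n,n′} with initial value s solves recoverable wait-free binary consensus among n′ processes: in the algorithm where each process with input x ∈ {0,1}, starting from its initial state (also after each crash), first applies op_R to O and decides v if the response is s_{v,i} for some i, decides 0 if the response is ⊥, and otherwise (response s) applies op_x to O and decides the value returned, every execution with individual crashes satisfies agreement, validity, and recoverable wait-freedom; moreover in every execution of this algorithm no op_R operation ever returns ⊥. -/

import Mathlib

namespace RecoverableConsensus

/-- A deterministic object type: a set of values, operations and responses together with a
transition function assigning to each (value, operation) pair a unique response and a unique
resulting value. -/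
structure DetType : Type 1 where
  Value : Type
  Op : Type
  Resp : Type
  δ : Value → Op → Resp × Value

/-- A type is readable if it has a Read operation that returns (an injective encoding of)
the current value of the object without changing it. -/
def Readable (T : DetType) : Prop :=
  ∃ (read : T.Op) (ι : T.Value → T.Resp),
    Function.Injective ι ∧ ∀ v, T.δ v read = (ι v, v)

/-- The register type over the value set `V`: the operation `none` is Read (returning the
current value without changing it) and `some v` is Write(v) (changing the value to `v`). -/
def RegisterType (V : Type) : DetType where
  Value := V
  Op := Option V
  Resp := V
  δ := fun u op =>
    match op with
    | none => (u, u)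
    | some v => (v, v)

def IsRegister (T : DetType) : Prop := ∃ V : Type, T = RegisterType V

/-- An event is either a step by a process or a crash of a process. -/
inductive Event (n : ℕ) : Type where
  | step : Fin n → Event n
  | crash : Fin n → Event n
deriving DecidableEq

/-- An algorithm for `n` processes: a collection of shared objects, each with a deterministic
type and an initial value, and for each process a deterministic state machine with an initial
state depending on the process's binary input.  Each state determines the process's next step
(`pending`: an operation applied to a designated object, or `none` for a no-op); the state
reached after a step is determined by the current state and the response received (`next`).
`output i s = some v` means that `s` is an output state of process `i` for the value `v`;
processes in output states take only no-op steps. -/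
structure Algorithm (n : ℕ) : Type 1 where
  ObjIdx : Type
  objType : ObjIdx → DetType
  objInit : (o : ObjIdx) → (objType o).Value
  PState : Fin n → Type
  init : (i : Fin n) → Bool → PState i
  pending : (i : Fin n) → PState i → Option ((o : ObjIdx) × (objType o).Op)
  next : (i : Fin n) → PState i → (o : ObjIdx) → (objType o).Resp → PState i
  output : (i : Fin n) → PState i → Option Bool
  output_noop : ∀ i s, output i s ≠ none → pending i s = none

/-- A configuration assigns a state to each process and a value to each object. -/
structure Config {n : ℕ} (A : Algorithm n) : Type where
  pstate : (i : Fin n) → A.PState i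
  oval : (o : A.ObjIdx) → (A.objType o).Value

variable {n : ℕ}

/-- The effect of one event on a configuration.  A crash of `p_i` resets `p_i` to its initial
state (for its input) and leaves all object values unchanged; a step of `p_i` applies its
pending operation (if any) to the designated object, receiving the response determined by the
type's transition function. -/
noncomputable def applyEvent (A : Algorithm n) (input : Fin n → Bool) (C : Config A) :
    Event n → Config A
  | .crash i => { C with pstate := Function.update C.pstate i (A.init i (input i)) }
  | .step i =>
    letI : DecidableEq A.ObjIdx := Classical.decEq _
    match A.pending i (C.pstate i) with
    | none => C
    | some ⟨o, op⟩ =>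
      { pstate := Function.update C.pstate i
          (A.next i (C.pstate i) o ((A.objType o).δ (C.oval o) op).1),
        oval := Function.update C.oval o ((A.objType o).δ (C.oval o) op).2 }

/-- Since the algorithm is deterministic, a finite execution from `C` is determined by its
schedule, i.e. its list of events; `run A input C σ` is the configuration `Cσ` reached by
applying the events of `σ` in order from `C`. -/
noncomputable def run (A : Algorithm n) (input : Fin n → Bool) (C : Config A) :
    List (Event n) → Config A
  | [] => C
  | e :: σ => run A input (applyEvent A input C e) σ

/-- The initial configuration: every process in its initial state, every object at its
initial value. -/
def initConfig (A : Algorithm n) (input : Fin n → Bool) : Config A :=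
  ⟨fun i => A.init i (input i), A.objInit⟩

/-- Process `i` has decided `v` in `Cσ`: at some point along the execution `σ` from `C`,
process `i` was in an output state for `v`. -/
def HasDecided (A : Algorithm n) (input : Fin n → Bool) (C : Config A)
    (σ : List (Event n)) (i : Fin n) (v : Bool) : Prop :=
  ∃ τ, τ <+: σ ∧ A.output i ((run A input C τ).pstate i) = some v

def CrashFree (σ : List (Event n)) : Prop := ∀ i : Fin n, Event.crash i ∉ σ

/-- The first `k` events of an infinite execution. -/
def initSeg (e : ℕ → Event n) (k : ℕ) : List (Event n) := (List.range k).map e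

/-- Agreement: in every execution no two processes decide different values. -/
def Agreement (A : Algorithm n) : Prop :=
  ∀ (input : Fin n → Bool) (σ : List (Event n)) (i j : Fin n) (v w : Bool),
    HasDecided A input (initConfig A input) σ i v →
    HasDecided A input (initConfig A input) σ j w → v = w

/-- Validity: every decided value is the input of some process. -/
def Validity (A : Algorithm n) : Prop :=
  ∀ (input : Fin n → Bool) (σ : List (Event n)) (i : Fin n) (v : Bool),
    HasDecided A input (initConfig A input) σ i v → ∃ j, input j = v

/-- Recoverable wait-freedom: every process, starting from its initial state, either crashes
or decides within a finite number of its own steps.  Equivalently: in every infinite execution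
in which process `i` starts at (or is reset by a crash to) its initial state, takes infinitely
many steps and crashes only finitely often, it eventually reaches an output state. -/
def RecWaitFree (A : Algorithm n) : Prop :=
  ∀ (input : Fin n → Bool) (C : Config A) (e : ℕ → Event n) (i : Fin n),
    (C.pstate i = A.init i (input i) ∨ ∃ k, e k = Event.crash i) →
    (∀ m, ∃ k, m ≤ k ∧ e k = Event.step i) →
    (∃ m, ∀ k, m ≤ k → e k ≠ Event.crash i) →
    ∃ (k : ℕ) (v : Bool), A.output i ((run A input C (initSeg e k)).pstate i) = some v

/-- A recoverable wait-free binary consensus algorithm. -/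
def SolvesRecConsensus (A : Algorithm n) : Prop :=
  Agreement A ∧ Validity A ∧ RecWaitFree A

/-- Agreement restricted to crash-free executions. -/
def AgreementCF (A : Algorithm n) : Prop :=
  ∀ (input : Fin n → Bool) (σ : List (Event n)), CrashFree σ →
    ∀ (i j : Fin n) (v w : Bool),
      HasDecided A input (initConfig A input) σ i v →
      HasDecided A input (initConfig A input) σ j w → v = w

/-- Validity restricted to crash-free executions. -/
def ValidityCF (A : Algorithm n) : Prop :=
  ∀ (input : Fin n → Bool) (σ : List (Event n)), CrashFree σ →
    ∀ (i : Fin n) (v : Bool),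
      HasDecided A input (initConfig A input) σ i v → ∃ j, input j = v

/-- Wait-freedom: in crash-free executions, every process that takes infinitely many steps
decides. -/
def WaitFree (A : Algorithm n) : Prop :=
  ∀ (input : Fin n → Bool) (e : ℕ → Event n),
    (∀ (k : ℕ) (i : Fin n), e k ≠ Event.crash i) →
    ∀ i : Fin n, (∀ m, ∃ k, m ≤ k ∧ e k = Event.step i) →
    ∃ (k : ℕ) (v : Bool),
      A.output i ((run A input (initConfig A input) (initSeg e k)).pstate i) = some v

/-- A wait-free binary consensus algorithm (for the model in which crashes are permanent,
i.e. only crash-free executions are relevant). -/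
def SolvesWFConsensus (A : Algorithm n) : Prop :=
  AgreementCF A ∧ ValidityCF A ∧ WaitFree A

/-- The number of crashes of process `i` in `σ`. -/
def crashCount (i : Fin n) (σ : List (Event n)) : ℕ :=
  (σ.filter fun e => decide (e = Event.crash i)).length

def isStepBelow (i : Fin n) : Event n → Bool
  | .step j => decide (j < i)
  | .crash _ => false

/-- The total number of steps taken by processes `p_0, …, p_{i-1}` in `σ`. -/
def stepsBelow (i : Fin n) (σ : List (Event n)) : ℕ := (σ.filter (isStepBelow i)).length

/-- The crash bound: for every process `p_i`, the number of crashes of `p_i` is at most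
`z·n` times the total number of steps of `p_0, …, p_{i-1}` (for `i = 0` this says that `p_0`
never crashes). -/
def EMem (z : ℕ) (σ : List (Event n)) : Prop :=
  ∀ i : Fin n, crashCount i σ ≤ z * n * stepsBelow i σ

/-- `𝓔_z`: executions satisfying the crash bound. -/
def ESet (n z : ℕ) : Set (List (Event n)) := { σ | EMem z σ }

/-- `𝓔*_z`: executions satisfying the crash bound in every prefix. -/
def EStarSet (n z : ℕ) : Set (List (Event n)) := { σ | ∀ τ, τ <+: σ → EMem z τ }

/-- `e` is an event by a process in `P`. -/
def eventBy (P : Set (Fin n)) : Event n → Prop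
  | .step i => i ∈ P
  | .crash i => i ∈ P

/-- The set of processes `P` is `v`-univalent in the execution `α` from `C` with respect to
the set of executions `𝒜`. -/
def VUnivalentIn (A : Algorithm n) (input : Fin n → Bool) (C : Config A)
    (𝒜 : Set (List (Event n))) (P : Set (Fin n)) (α : List (Event n)) (v : Bool) : Prop :=
  α ∈ 𝒜 ∧ ∀ β : List (Event n), (∀ e ∈ β, eventBy P e) → (α ++ β) ∈ 𝒜 →
    ∀ (i : Fin n) (w : Bool), HasDecided A input C (α ++ β) i w → w = v

/-- The set of processes `P` is bivalent in the execution `α` from `C` with respect to `𝒜`. -/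
def BivalentIn (A : Algorithm n) (input : Fin n → Bool) (C : Config A)
    (𝒜 : Set (List (Event n))) (P : Set (Fin n)) (α : List (Event n)) : Prop :=
  ∀ v : Bool, ∃ β : List (Event n), (∀ e ∈ β, eventBy P e) ∧ (α ++ β) ∈ 𝒜 ∧
    ∃ i : Fin n, HasDecided A input C (α ++ β) i v

/-- `P` is univalent in `α` with respect to `𝒜`: `v`-univalent for some `v`. -/
def UnivalentIn (A : Algorithm n) (input : Fin n → Bool) (C : Config A)
    (𝒜 : Set (List (Event n))) (P : Set (Fin n)) (α : List (Event n)) : Prop :=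
  ∃ v : Bool, VUnivalentIn A input C 𝒜 P α v

/-- `α ∈ 𝒜` is critical with respect to `𝒜`: `α` is bivalent with respect to `𝒜` and every
nonempty extension of `α` inside `𝒜` is univalent with respect to `𝒜`. -/
def Critical (A : Algorithm n) (input : Fin n → Bool) (C : Config A)
    (𝒜 : Set (List (Event n))) (α : List (Event n)) : Prop :=
  α ∈ 𝒜 ∧ BivalentIn A input C 𝒜 Set.univ α ∧
  ∀ β : List (Event n), β ≠ [] → (α ++ β) ∈ 𝒜 → UnivalentIn A input C 𝒜 Set.univ (α ++ β)

/-- Process `i` is on team `v` in `Cα` (with respect to `𝒜`): `α p_i` is `v`-univalent. -/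
def OnTeam (A : Algorithm n) (input : Fin n → Bool) (C : Config A)
    (𝒜 : Set (List (Event n))) (α : List (Event n)) (i : Fin n) (v : Bool) : Prop :=
  VUnivalentIn A input C 𝒜 Set.univ (α ++ [Event.step i]) v

/-- Process `i` is poised to apply an operation to object `O` in configuration `C`. -/
def PoisedAt (A : Algorithm n) (C : Config A) (i : Fin n) (O : A.ObjIdx) : Prop :=
  ∃ op, A.pending i (C.pstate i) = some ⟨O, op⟩

/-- `σ ∈ 𝒮(P)`: a crash-free schedule in which each process of `P` takes at most one step
and no other process takes a step. -/
def IsSched (P : Set (Fin n)) (σ : List (Event n)) : Prop :=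
  ∃ l : List (Fin n), l.Nodup ∧ (∀ j ∈ l, j ∈ P) ∧ σ = l.map Event.step

/-- The schedule `λ_k = c_k c_{k+1} ⋯ c_{n-1}`. -/
def lambdaSched (n k : ℕ) : List (Event n) :=
  ((List.finRange n).filter fun j => decide (k ≤ j.val)).map Event.crash

/-- `U_v`: the set of values of object `O` reachable from `Dα` by a schedule in `𝒮(𝒫)`
whose first process is on team `v`. -/
def USetCfg (A : Algorithm n) (input : Fin n → Bool) (D : Config A)
    (𝒜 : Set (List (Event n))) (α : List (Event n)) (O : A.ObjIdx) (v : Bool) :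
    Set (A.objType O).Value :=
  { w | ∃ (j : Fin n) (σ : List (Event n)), OnTeam A input D 𝒜 α j v ∧
        IsSched {k : Fin n | k ≠ j} σ ∧
        w = (run A input D (α ++ Event.step j :: σ)).oval O }

/-- The configuration `Dα` is `v`-hiding. -/
def VHiding (A : Algorithm n) (input : Fin n → Bool) (D : Config A)
    (𝒜 : Set (List (Event n))) (α : List (Event n)) (O : A.ObjIdx) (v : Bool) : Prop :=
  USetCfg A input D 𝒜 α O false ∩ USetCfg A input D 𝒜 α O true = ∅ ∧
  (run A input D α).oval O ∈ USetCfg A input D 𝒜 α O v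

/-- The configuration `Dα` is `n`-recording. -/
def NRecordingCfg (A : Algorithm n) (input : Fin n → Bool) (D : Config A)
    (𝒜 : Set (List (Event n))) (α : List (Event n)) (O : A.ObjIdx) : Prop :=
  USetCfg A input D 𝒜 α O false ∩ USetCfg A input D 𝒜 α O true = ∅ ∧
  ∀ v : Bool, (run A input D α).oval O ∈ USetCfg A input D 𝒜 α O v →
    ∃! j : Fin n, OnTeam A input D 𝒜 α j (!v)

/-- Apply the operations `o i` of the processes listed in `σ`, in order, to an object of type
`T`, starting from the value `u`. -/
def applyOps (T : DetType) (o : Fin n → T.Op) : T.Value → List (Fin n) → T.Value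
  | u, [] => u
  | u, i :: σ => applyOps T o (T.δ u (o i)).2 σ

/-- `U_x`: the set of values obtainable by applying the operations of the processes of a
duplicate-free schedule whose first process is on team `x` to an object with initial value
`u`. -/
def UVals (T : DetType) (o : Fin n → T.Op) (u : T.Value) (team : Fin n → Bool) (x : Bool) :
    Set T.Value :=
  { v | ∃ (i : Fin n) (σ : List (Fin n)), team i = x ∧ (i :: σ).Nodup ∧
        v = applyOps T o u (i :: σ) }

/-- A deterministic type `T` is `n`-recording. -/
def NRecording (n : ℕ) (T : DetType) : Prop :=
  ∃ (u : T.Value) (team : Fin n → Bool) (o : Fin n → T.Op),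
    (∀ x : Bool, ∃ i, team i = x) ∧
    (UVals T o u team false ∩ UVals T o u team true = ∅) ∧
    (∀ x : Bool, u ∈ UVals T o u team x → ∃! i, team i = !x)

end RecoverableConsensus
namespace RecoverableConsensus

/-- The values of the type `𝒯_{n,n'}`: `s`, `s_⊥`, and `s_{x,i}` for `x ∈ {0,1}` and
`i ∈ {1, …, n-1}` (here `mid x i` with `i : Fin (n-1)` represents `s_{x, i+1}`). -/
inductive TVal (n : ℕ) : Type where
  | s : TVal n
  | bot : TVal n
  | mid : Bool → Fin (n - 1) → TVal n
deriving DecidableEq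

/-- The operations of `𝒯_{n,n'}`. -/
inductive TOp : Type where
  | op0 | op1 | opR
deriving DecidableEq

/-- The responses of `𝒯_{n,n'}`: a bit, a value, or `⊥`. -/
inductive TResp (n : ℕ) : Type where
  | bit : Bool → TResp n
  | val : TVal n → TResp n
  | botR : TResp n
deriving DecidableEq

/-- The deterministic (non-readable) type `𝒯_{n,n'}` for `n > n' ≥ 1`. -/
def TType (n n' : ℕ) (hn : 2 ≤ n) : DetType where
  Value := TVal n
  Op := TOp
  Resp := TResp n
  δ := fun v op =>
    match v, op with
    | .s, .op0 => (.bit false, .mid false ⟨0, by omega⟩)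
    | .s, .op1 => (.bit true, .mid true ⟨0, by omega⟩)
    | .s, .opR => (.val .s, .s)
    | .bot, _ => (.botR, .bot)
    | .mid x i, .op0 =>
        if h : i.val + 1 < n - 1 then (.bit x, .mid x ⟨i.val + 1, h⟩) else (.bit x, .bot)
    | .mid x i, .op1 =>
        if h : i.val + 1 < n - 1 then (.bit x, .mid x ⟨i.val + 1, h⟩) else (.bit x, .bot)
    | .mid x i, .opR =>
        if i.val + 1 ≤ n' then (.val (.mid x i), .mid x i) else (.botR, .bot)

/-- The algorithm uses only objects of type `T` together with registers. -/
def UsesTypeAndRegisters {n : ℕ} (A : Algorithm n) (T : DetType) : Prop :=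
  ∀ o : A.ObjIdx, A.objType o = T ∨ IsRegister (A.objType o)

end RecoverableConsensus
namespace RecoverableConsensus

/-- Local states for the one-shot consensus algorithm: `start x` (about to apply `op_x`) and
`done v` (decided `v`). -/
inductive OSState : Type where
  | start : Bool → OSState
  | done : Bool → OSState
deriving DecidableEq

/-- The wait-free consensus algorithm for `n` processes using a single object of type
`𝒯_{n,n'}` with initial value `s`: a process with input `x` applies `op_x` and decides the
value returned. -/
def oneShotAlg (n n' : ℕ) (hn : 2 ≤ n) : Algorithm n where
  ObjIdx := Unit
  objType _ := TType n n' hn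
  objInit _ := TVal.s
  PState _ := OSState
  init _ x := .start x
  pending _ s :=
    match s with
    | .start x => some ⟨(), if x then TOp.op1 else TOp.op0⟩
    | .done _ => none
  next _ s _ r :=
    match s, r with
    | .start _, TResp.bit b => .done b
    | .start x, _ => .done x
    | .done v, _ => .done v
  output _ s :=
    match s with
    | .done v => some v
    | _ => none
  output_noop := by
    intro i s h
    cases s with
    | start x => simp at h
    | done v => rfl

/-- Local states for the recoverable consensus algorithm: `phase0 x` (about to apply `op_R`),
`phase1 x` (saw `s`, about to apply `op_x`), `done v` (decided `v`). -/
inductive RecState : Type where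
  | phase0 : Bool → RecState
  | phase1 : Bool → RecState
  | done : Bool → RecState
deriving DecidableEq

/-- The recoverable wait-free consensus algorithm for `n'` processes using a single object of
type `𝒯_{n,n'}` with initial value `s`: a process with input `x` first applies `op_R`; if the
response is `s_{v,i}` it decides `v`; if the response is `⊥` it decides `0`; otherwise (the
response is `s`) it applies `op_x` and decides the value returned. -/
def recAlg (n n' : ℕ) (hn : 2 ≤ n) : Algorithm n' where
  ObjIdx := Unit
  objType _ := TType n n' hn
  objInit _ := TVal.s
  PState _ := RecState
  init _ x := .phase0 x
  pending _ s :=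
    match s with
    | .phase0 _ => some ⟨(), TOp.opR⟩
    | .phase1 x => some ⟨(), if x then TOp.op1 else TOp.op0⟩
    | .done _ => none
  next _ s _ r :=
    match s, r with
    | .phase0 x, TResp.val TVal.s => .phase1 x
    | .phase0 _, TResp.val (TVal.mid v _) => .done v
    | .phase0 _, TResp.botR => .done false
    | .phase0 x, _ => .phase0 x
    | .phase1 _, TResp.bit b => .done b
    | .phase1 x, _ => .phase1 x
    | .done v, _ => .done v
  output _ s :=
    match s with
    | .done v => some v
    | _ => none
  output_noop := by
    intro i s h
    cases s with
    | phase0 x => simp at h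
    | phase1 x => simp at h
    | done v => rfl

end RecoverableConsensus

/-!
Give `s`, `s_{v,i}` and `s_⊥` the levels `0`, `i` and `n`, so that every `op_x` raises the level
by at most one, and call a process *poised* if it has read `s` and is about to apply `op_x`.
The key invariant is that the level plus the number of poised processes is at most `n'`.  At
level `0` it holds trivially; an `op_x` raises the level by one but uses up a poised process;
and at a positive level no process becomes poised, because `op_R` then returns some `s_{v,i}`,
even after a crash.  As `n' < n`, the value `s_⊥` is never reached and `op_R` only sees
`i ≤ n'`.  Hence the bit `v` of `s_{v,i}` never changes once it is set, it is the input of the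
first process to apply `op_x`, and it is the only value decided.

Recoverable wait-freedom is required from arbitrary configurations.  A process that starts from
its initial state decides with its first step unless that step reads `s`.  In that case the
level is `0`, so the invariant holds from that point on, whatever happened before, and the next
step of the process returns a bit.
-/

namespace RecoverableConsensus

section Executions

variable {m : ℕ} {A : Algorithm m} {input : Fin m → Bool} {C : Config A} {i : Fin m}

theorem pstate_applyEvent_of_ne {e : Event m} (hs : e ≠ .step i) (hc : e ≠ .crash i) :
    (applyEvent A input C e).pstate i = C.pstate i := by
  cases e with
  | crash j =>
    have hij : i ≠ j := fun h => hc (h ▸ rfl)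
    exact Function.update_of_ne hij _ _
  | step j =>
    have hij : i ≠ j := fun h => hs (h ▸ rfl)
    simp only [applyEvent]
    split
    · rfl
    · exact Function.update_of_ne hij _ _

theorem applyEvent_step_of_pending_eq_none (h : A.pending i (C.pstate i) = none) :
    applyEvent A input C (.step i) = C := by
  simp only [applyEvent, h]

theorem pstate_applyEvent_step {o : A.ObjIdx} {op : (A.objType o).Op} {r : (A.objType o).Resp}
    {w : (A.objType o).Value} (hpending : A.pending i (C.pstate i) = some ⟨o, op⟩)
    (hδ : (A.objType o).δ (C.oval o) op = (r, w)) :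
    (applyEvent A input C (.step i)).pstate =
      Function.update C.pstate i (A.next i (C.pstate i) o r) := by
  simp only [applyEvent, hpending, hδ]

theorem oval_applyEvent_step {o : A.ObjIdx} {op : (A.objType o).Op} {r : (A.objType o).Resp}
    {w : (A.objType o).Value} (hpending : A.pending i (C.pstate i) = some ⟨o, op⟩)
    (hδ : (A.objType o).δ (C.oval o) op = (r, w)) :
    (applyEvent A input C (.step i)).oval o = w := by
  simp only [applyEvent, hpending, hδ, Function.update_self]

theorem run_append (C : Config A) (σ τ : List (Event m)) :
    run A input C (σ ++ τ) = run A input (run A input C σ) τ := by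
  induction σ generalizing C with
  | nil => rfl
  | cons e _ ih => exact ih _

/-- A predicate on configurations is stable if no event, by any process, falsifies it. -/
def Stable (A : Algorithm m) (input : Fin m → Bool) (p : Config A → Prop) : Prop :=
  ∀ C e, p C → p (applyEvent A input C e)

theorem Stable.apply_run {p : Config A → Prop} (hp : Stable A input p) (hC : p C)
    (σ : List (Event m)) :
    p (run A input C σ) := by
  induction σ generalizing C with
  | nil => exact hC
  | cons e _ ih => exact ih (hp C e hC)

theorem Stable.apply_run_of_prefix {p : Config A → Prop} (hp : Stable A input p)
    {σ τ : List (Event m)} (hστ : σ <+: τ) (hσ : p (run A input C σ)) :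
    p (run A input C τ) := by
  obtain ⟨ρ, rfl⟩ := hστ
  rw [run_append]
  exact hp.apply_run hσ ρ

variable {e : ℕ → Event m}

theorem initSeg_succ (e : ℕ → Event m) (k : ℕ) : initSeg e (k + 1) = initSeg e k ++ [e k] := by
  simp only [initSeg, List.range_succ, List.map_append, List.map_singleton]

theorem initSeg_prefix {a b : ℕ} (hab : a ≤ b) : initSeg e a <+: initSeg e b := by
  induction b, hab using Nat.le_induction with
  | base => exact List.prefix_rfl
  | succ b _ ih => exact ih.trans (initSeg_succ e b ▸ List.prefix_append _ _)

theorem run_initSeg_succ (k : ℕ) :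
    run A input C (initSeg e (k + 1)) = applyEvent A input (run A input C (initSeg e k)) (e k) := by
  rw [initSeg_succ, run_append]
  rfl

theorem pstate_run_initSeg_eq {a b : ℕ} (hab : a ≤ b)
    (he : ∀ k, a ≤ k → k < b → e k ≠ .step i ∧ e k ≠ .crash i) :
    (run A input C (initSeg e b)).pstate i = (run A input C (initSeg e a)).pstate i := by
  induction b, hab using Nat.le_induction with
  | base => rfl
  | succ b hab ih =>
    obtain ⟨hs, hc⟩ := he b hab b.lt_succ_self
    rw [run_initSeg_succ, pstate_applyEvent_of_ne hs hc]
    exact ih fun k hak hkb => he k hak (hkb.trans b.lt_succ_self)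

theorem exists_next_step {a : ℕ} (hstep : ∃ k, a ≤ k ∧ e k = .step i)
    (hcrash : ∀ k, a ≤ k → e k ≠ .crash i) :
    ∃ k, a ≤ k ∧ e k = .step i ∧
      (run A input C (initSeg e k)).pstate i = (run A input C (initSeg e a)).pstate i := by
  obtain ⟨k, hk⟩ := exists_minimal_of_wellFoundedLT _ hstep
  exact ⟨k, hk.prop.1, hk.prop.2, pstate_run_initSeg_eq hk.prop.1 fun l hal hlk =>
    ⟨fun hl => hk.not_prop_of_lt hlk ⟨hal, hl⟩, hcrash l hal⟩⟩

theorem exists_last_start (hinit : C.pstate i = A.init i (input i) ∨ ∃ k, e k = .crash i)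
    (hfin : ∃ a, ∀ k, a ≤ k → e k ≠ .crash i) :
    ∃ a, (run A input C (initSeg e a)).pstate i = A.init i (input i) ∧
      ∀ k, a ≤ k → e k ≠ .crash i := by
  obtain ⟨a, ha⟩ := exists_minimal_of_wellFoundedLT _ hfin
  refine ⟨a, ?_, ha.prop⟩
  cases a with
  | zero => exact hinit.resolve_right fun ⟨k, hk⟩ => ha.prop k k.zero_le hk
  | succ b =>
    have hb : e b = .crash i := by
      by_contra hb
      refine ha.not_prop_of_lt b.lt_succ_self fun k hbk hk => ?_
      rcases hbk.eq_or_lt with rfl | hlt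
      exacts [hb hk, ha.prop k hlt hk]
    rw [run_initSeg_succ, hb]
    exact Function.update_self _ _ _

end Executions

section ObjectType

variable {n n' : ℕ} {hn : 2 ≤ n}

/-- The number of operations `op_0`, `op_1` that lead from `s` to a value. -/
def TVal.level : TVal n → ℕ
  | .s => 0
  | .mid _ i => i.val + 1
  | .bot => n

/-- The bit `x` of the value `s_{x,i}`, which records the first `op_x` applied to the object. -/
def TVal.winner : TVal n → Option Bool
  | .mid x _ => some x
  | _ => none

/-- The operation `op_x`. -/
def TOp.write (x : Bool) : TOp := if x then .op1 else .op0

theorem TVal.eq_s_or_eq_mid {v : TVal n} (hv : v.level < n) : v = .s ∨ ∃ x i, v = .mid x i := by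
  cases v with
  | s => exact .inl rfl
  | bot => exact absurd hv (lt_irrefl n)
  | mid x i => exact .inr ⟨x, i, rfl⟩

theorem TType_δ_opR_of_level_le {v : TVal n} (hv : v.level ≤ n') (h2 : n' < n) :
    (TType n n' hn).δ v .opR = (.val v, v) := by
  cases v with
  | s => rfl
  | bot => exact absurd hv h2.not_ge
  | mid x i => exact if_pos hv

theorem TType_δ_opR_of_lt_level {v : TVal n} (hv : n' < v.level) :
    (TType n n' hn).δ v .opR = (.botR, .bot) := by
  cases v with
  | s => exact absurd hv n'.not_lt_zero
  | bot => rfl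
  | mid x i => exact if_neg hv.not_ge

theorem TType_δ_write {v : TVal n} (hv : v.level + 1 < n) (x : Bool) :
    ∃ w : TVal n, (TType n n' hn).δ v (.write x) = (.bit (v.winner.getD x), w) ∧
      w.level = v.level + 1 ∧ w.winner = some (v.winner.getD x) := by
  cases v with
  | s => cases x <;> exact ⟨_, rfl, rfl, rfl⟩
  | bot => exact absurd hv (by simp only [TVal.level]; omega)
  | mid y i =>
    have hi : i.val + 1 < n - 1 := by simp only [TVal.level] at hv; omega
    refine ⟨.mid y ⟨i.val + 1, hi⟩, ?_, rfl, rfl⟩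
    cases x <;> exact dif_pos hi

end ObjectType

section Poised

variable {n' : ℕ} {P : Fin n' → RecState} {i : Fin n'}

/-- Whether a process has read `s` and is about to apply `op_x`. -/
def RecState.isPoised : RecState → Bool
  | .phase1 _ => true
  | _ => false

/-- The processes that have read `s` and are about to apply `op_x`. -/
def poised (P : Fin n' → RecState) : Finset (Fin n') :=
  {j | (P j).isPoised}

theorem mem_poised_of_phase1 {x : Bool} (hi : P i = .phase1 x) : i ∈ poised P :=
  Finset.mem_filter.2 ⟨Finset.mem_univ i, hi ▸ rfl⟩

theorem poised_update {q : RecState} (hq : q.isPoised = false) :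
    poised (Function.update P i q) = (poised P).erase i := by
  ext j
  by_cases hj : j = i <;> simp [poised, hj, hq]

theorem card_poised_update_le {q : RecState} (hq : q.isPoised = false) :
    (poised (Function.update P i q)).card ≤ (poised P).card :=
  poised_update hq ▸ Finset.card_erase_le

theorem card_poised_update_lt {q : RecState} (hi : i ∈ poised P) (hq : q.isPoised = false) :
    (poised (Function.update P i q)).card < (poised P).card :=
  poised_update hq ▸ Finset.card_erase_lt_of_mem hi

theorem card_poised_le (P : Fin n' → RecState) : (poised P).card ≤ n' := by
  simpa only [Fintype.card_fin] using Finset.card_le_univ (poised P)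

end Poised

section Transitions

variable {n n' : ℕ} {input : Fin n' → Bool} {P P' : Fin n' → RecState} {o o' : TVal n}

/-- The invariant that keeps the object away from `s_⊥`: of the `n'` levels at which `op_R`
returns the value, enough are left for all poised processes. -/
def LevelBounded (P : Fin n' → RecState) (o : TVal n) : Prop :=
  o.level + (poised P).card ≤ n'

/-- The invariant behind agreement and validity: only inputs are proposed, and only the recorded
bit is decided. -/
structure Consistent (input : Fin n' → Bool) (P : Fin n' → RecState) (o : TVal n) : Prop where
  mem_range_of_phase0 : ∀ j x, P j = .phase0 x → x ∈ Set.range input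
  mem_range_of_phase1 : ∀ j x, P j = .phase1 x → x ∈ Set.range input
  mem_range_of_winner : ∀ v, o.winner = some v → v ∈ Set.range input
  winner_of_done : ∀ j v, P j = .done v → o.winner = some v

/-- `Transition input P o P' o'` says that an event of the recoverable consensus algorithm can
lead from local states `P` and object value `o` to `P'` and `o'`, provided that the event starts
from a configuration satisfying `LevelBounded`. -/
inductive Transition (input : Fin n' → Bool) (P : Fin n' → RecState) (o : TVal n) :
    (Fin n' → RecState) → TVal n → Prop
  | crash (i : Fin n') : Transition input P o (Function.update P i (.phase0 (input i))) o
  | idle : Transition input P o P o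
  | readInitial {i : Fin n'} {x : Bool} (hi : P i = .phase0 x) (ho : o = .s) :
      Transition input P o (Function.update P i (.phase1 x)) o
  | readWinner {i : Fin n'} {x v : Bool} (hi : P i = .phase0 x) (ho : o.winner = some v) :
      Transition input P o (Function.update P i (.done v)) o
  | write {i : Fin n'} {x : Bool} {o' : TVal n} (hi : P i = .phase1 x)
      (hlevel : o'.level = o.level + 1) (hwinner : o'.winner = some (o.winner.getD x)) :
      Transition input P o (Function.update P i (.done (o.winner.getD x))) o'

theorem levelBounded_s (P : Fin n' → RecState) : LevelBounded P (.s : TVal n) :=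
  (Nat.zero_add _).trans_le (card_poised_le P)

theorem LevelBounded.level_le (h : LevelBounded P o) : o.level ≤ n' :=
  (Nat.le_add_right _ _).trans h

theorem LevelBounded.level_add_one_le {i : Fin n'} {x : Bool} (h : LevelBounded P o)
    (hi : P i = .phase1 x) : o.level + 1 ≤ n' :=
  (Nat.add_le_add_left (Finset.card_pos.2 ⟨i, mem_poised_of_phase1 hi⟩) _).trans h

theorem Transition.levelBounded (ht : Transition input P o P' o') (h : LevelBounded P o) :
    LevelBounded P' o' := by
  cases ht with
  | crash i => exact (Nat.add_le_add_left (card_poised_update_le rfl) _).trans h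
  | idle => exact h
  | readInitial hi ho => exact ho ▸ levelBounded_s _
  | readWinner hi ho => exact (Nat.add_le_add_left (card_poised_update_le rfl) _).trans h
  | @write i x o' hi hlevel hwinner =>
    have hlt : (poised (Function.update P i (.done (o.winner.getD x)))).card < (poised P).card :=
      card_poised_update_lt (mem_poised_of_phase1 hi) rfl
    unfold LevelBounded at h ⊢
    omega

theorem Transition.winner_eq_some (ht : Transition input P o P' o') {v : Bool}
    (hv : o.winner = some v) : o'.winner = some v := by
  cases ht with
  | write hi hlevel hwinner => rw [hwinner, hv, Option.getD_some]
  | _ => exact hv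

theorem Transition.consistent (ht : Transition input P o P' o') (h : Consistent input P o) :
    Consistent input P' o' := by
  obtain ⟨h0, h1, hw, hd⟩ := h
  cases ht with
  | @write i x o' hi hlevel hwinner =>
    have hmem : o.winner.getD x ∈ Set.range input := by
      cases ho : o.winner with
      | none => exact h1 i x hi
      | some v => exact hw v ho
    constructor <;> grind [Function.update_apply]
  | _ => constructor <;> grind [Function.update_apply]

end Transitions

section Algorithm

variable {n n' : ℕ} {hn : 2 ≤ n} {input : Fin n' → Bool} {C : Config (recAlg n n' hn)}
  {i : Fin n'}

/-- The local states in a configuration of the algorithm, at their concrete type. -/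
def Config.states (C : Config (recAlg n n' hn)) : Fin n' → RecState := C.pstate

/-- The value of the single object in a configuration of the algorithm, at its concrete type. -/
def Config.value (C : Config (recAlg n n' hn)) : TVal n := C.oval ()

theorem output_eq_some_iff {v : Bool} :
    (recAlg n n' hn).output i (C.pstate i) = some v ↔ C.states i = .done v := by
  change (match C.states i with | .done v => some v | _ => none) = some v ↔ _
  cases C.states i <;> simp

theorem states_step {q q' : RecState} {op : TOp} {r : TResp n} {w : TVal n}
    (hi : C.states i = q) (hpending : (recAlg n n' hn).pending i q = some ⟨(), op⟩)
    (hδ : (TType n n' hn).δ C.value op = (r, w)) (hnext : (recAlg n n' hn).next i q () r = q') :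
    (applyEvent _ input C (.step i)).states = Function.update C.states i q' := by
  subst hi hnext
  exact pstate_applyEvent_step hpending hδ

theorem value_step {q : RecState} {op : TOp} {r : TResp n} {w : TVal n}
    (hi : C.states i = q) (hpending : (recAlg n n' hn).pending i q = some ⟨(), op⟩)
    (hδ : (TType n n' hn).δ C.value op = (r, w)) :
    (applyEvent _ input C (.step i)).value = w := by
  subst hi
  exact oval_applyEvent_step hpending hδ

theorem applyEvent_step_of_phase0 {x : Bool} (h2 : n' < n) (hlevel : C.value.level ≤ n')
    (hi : C.states i = .phase0 x) :
    (applyEvent _ input C (.step i)).value = C.value ∧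
      (C.value = .s ∧
          (applyEvent _ input C (.step i)).states = Function.update C.states i (.phase1 x) ∨
        ∃ v, C.value.winner = some v ∧
          (applyEvent _ input C (.step i)).states = Function.update C.states i (.done v)) := by
  have hδ : (TType n n' hn).δ C.value .opR = (.val C.value, C.value) :=
    TType_δ_opR_of_level_le hlevel h2
  refine ⟨value_step hi rfl hδ, ?_⟩
  rcases C.value.eq_s_or_eq_mid (hlevel.trans_lt h2) with hs | ⟨v, k, hv⟩
  · exact .inl ⟨hs, states_step hi rfl hδ (hs ▸ rfl)⟩
  · exact .inr ⟨v, hv ▸ rfl, states_step hi rfl hδ (hv ▸ rfl)⟩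

theorem applyEvent_step_of_phase1 {x : Bool} (hlevel : C.value.level + 1 < n)
    (hi : C.states i = .phase1 x) :
    (applyEvent _ input C (.step i)).states =
        Function.update C.states i (.done (C.value.winner.getD x)) ∧
      (applyEvent _ input C (.step i)).value.level = C.value.level + 1 ∧
      (applyEvent _ input C (.step i)).value.winner = some (C.value.winner.getD x) := by
  obtain ⟨w, hδ, hw⟩ := TType_δ_write (n' := n') (hn := hn) hlevel x
  rw [value_step hi rfl hδ]
  exact ⟨states_step hi rfl hδ rfl, hw⟩

theorem transition_applyEvent (h2 : n' < n) (hC : LevelBounded C.states C.value)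
    (e : Event n') :
    Transition input C.states C.value (applyEvent _ input C e).states
      (applyEvent _ input C e).value := by
  cases e with
  | crash i => exact .crash i
  | step i =>
    cases hi : C.states i with
    | phase0 x =>
      obtain ⟨hvalue, ⟨hs, hstates⟩ | ⟨v, hv, hstates⟩⟩ :=
        applyEvent_step_of_phase0 (input := input) h2 hC.level_le hi <;> rw [hvalue, hstates]
      exacts [.readInitial hi hs, .readWinner hi hv]
    | phase1 x =>
      obtain ⟨hstates, hlevel, hwinner⟩ :=
        applyEvent_step_of_phase1 (input := input) ((hC.level_add_one_le hi).trans_lt h2) hi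
      rw [hstates]
      exact .write hi hlevel hwinner
    | done v =>
      have hpending : (recAlg n n' hn).pending i (C.states i) = none := hi ▸ rfl
      rw [applyEvent_step_of_pending_eq_none hpending]
      exact .idle

theorem stable_levelBounded (h2 : n' < n) :
    Stable (recAlg n n' hn) input fun C => LevelBounded C.states C.value :=
  fun _ e hC => (transition_applyEvent h2 hC e).levelBounded hC

theorem stable_levelBounded_and_consistent (h2 : n' < n) :
    Stable (recAlg n n' hn) input fun C =>
      LevelBounded C.states C.value ∧ Consistent input C.states C.value :=
  fun _ e ⟨hC, hcons⟩ =>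
    have ht := transition_applyEvent h2 hC e
    ⟨ht.levelBounded hC, ht.consistent hcons⟩

theorem stable_levelBounded_and_winner (h2 : n' < n) (v : Bool) :
    Stable (recAlg n n' hn) input fun C =>
      LevelBounded C.states C.value ∧ C.value.winner = some v :=
  fun _ e ⟨hC, hv⟩ =>
    have ht := transition_applyEvent h2 hC e
    ⟨ht.levelBounded hC, ht.winner_eq_some hv⟩

theorem consistent_initConfig :
    Consistent input (initConfig (recAlg n n' hn) input).states
      (initConfig (recAlg n n' hn) input).value where
  mem_range_of_phase0 j _ h := by cases h; exact ⟨j, rfl⟩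
  mem_range_of_phase1 _ _ h := by cases h
  mem_range_of_winner _ h := by cases h
  winner_of_done _ _ h := by cases h

theorem levelBounded_and_consistent_run (h2 : n' < n) (σ : List (Event n')) :
    LevelBounded (run _ input (initConfig (recAlg n n' hn) input) σ).states
        (run _ input (initConfig (recAlg n n' hn) input) σ).value ∧
      Consistent input (run _ input (initConfig (recAlg n n' hn) input) σ).states
        (run _ input (initConfig (recAlg n n' hn) input) σ).value :=
  (stable_levelBounded_and_consistent h2).apply_run ⟨levelBounded_s _, consistent_initConfig⟩ σ

theorem winner_of_hasDecided (h2 : n' < n) {σ : List (Event n')} {v : Bool}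
    (h : HasDecided (recAlg n n' hn) input (initConfig _ input) σ i v) :
    (run _ input (initConfig (recAlg n n' hn) input) σ).value.winner = some v := by
  obtain ⟨τ, hτσ, hout⟩ := h
  obtain ⟨hbound, hcons⟩ := levelBounded_and_consistent_run (hn := hn) (input := input) h2 τ
  have hτ := hcons.winner_of_done i v (output_eq_some_iff.1 hout)
  exact ((stable_levelBounded_and_winner h2 v).apply_run_of_prefix hτσ ⟨hbound, hτ⟩).2

theorem recAlg_agreement (h2 : n' < n) : Agreement (recAlg n n' hn) :=
  fun _ _ _ _ _ _ hv hw => Option.some.inj <|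
    (winner_of_hasDecided h2 hv).symm.trans (winner_of_hasDecided h2 hw)

theorem recAlg_validity (h2 : n' < n) : Validity (recAlg n n' hn) :=
  fun _ σ _ v hv =>
    (levelBounded_and_consistent_run h2 σ).2.mem_range_of_winner v (winner_of_hasDecided h2 hv)

theorem done_or_value_eq_s_of_step_phase0 {x : Bool} (h2 : n' < n)
    (hi : C.states i = .phase0 x) :
    (∃ v, (applyEvent _ input C (.step i)).states i = .done v) ∨
      (applyEvent _ input C (.step i)).states i = .phase1 x ∧
        (applyEvent _ input C (.step i)).value = .s := by
  rcases le_or_gt C.value.level n' with hle | hlt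
  · obtain ⟨hvalue, ⟨hs, hstates⟩ | ⟨v, -, hstates⟩⟩ :=
      applyEvent_step_of_phase0 (input := input) h2 hle hi <;> rw [hstates, Function.update_self]
    exacts [.inr ⟨rfl, hvalue.trans hs⟩, .inl ⟨v, rfl⟩]
  · rw [states_step hi rfl (TType_δ_opR_of_lt_level hlt) (q' := .done false) rfl]
    exact .inl ⟨false, Function.update_self _ _ _⟩

theorem done_of_step_phase1 {x : Bool} (hlevel : C.value.level + 1 < n)
    (hi : C.states i = .phase1 x) :
    ∃ v, (applyEvent _ input C (.step i)).states i = .done v := by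
  rw [(applyEvent_step_of_phase1 hlevel hi).1]
  exact ⟨_, Function.update_self _ _ _⟩

theorem recAlg_recWaitFree (h2 : n' < n) : RecWaitFree (recAlg n n' hn) := by
  intro input C e i hinit hstep hfin
  suffices h : ∃ k v, (run _ input C (initSeg e k)).states i = .done v by
    obtain ⟨k, v, hv⟩ := h
    exact ⟨k, v, output_eq_some_iff.2 hv⟩
  obtain ⟨a, hstart, hcrash⟩ := exists_last_start hinit hfin
  obtain ⟨k, hak, hek, hk⟩ := exists_next_step (hstep a) hcrash
  have hfirst := done_or_value_eq_s_of_step_phase0 (input := input) h2 (hk.trans hstart)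
  rw [← hek, ← run_initSeg_succ] at hfirst
  rcases hfirst with ⟨v, hv⟩ | ⟨hphase, hvalue⟩
  · exact ⟨k + 1, v, hv⟩
  obtain ⟨l, hkl, hel, hl⟩ := exists_next_step (hstep (k + 1))
    fun j hj => hcrash j (hak.trans (Nat.le_of_succ_le hj))
  have hbound : LevelBounded (run _ input C (initSeg e l)).states
      (run _ input C (initSeg e l)).value :=
    (stable_levelBounded h2).apply_run_of_prefix (initSeg_prefix hkl) (hvalue ▸ levelBounded_s _)
  have hpoised := hl.trans hphase
  have hlevel := (hbound.level_add_one_le hpoised).trans_lt h2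
  have hsecond := done_of_step_phase1 (input := input) hlevel hpoised
  rw [← hel, ← run_initSeg_succ] at hsecond
  exact ⟨l + 1, hsecond⟩

theorem opR_run_ne_botR (h2 : n' < n) (σ : List (Event n')) :
    ((TType n n' hn).δ (run _ input (initConfig (recAlg n n' hn) input) σ).value .opR).1 ≠
      .botR := by
  rw [TType_δ_opR_of_level_le (levelBounded_and_consistent_run h2 σ).1.level_le h2]
  exact nofun

end Algorithm

end RecoverableConsensus

open RecoverableConsensus in
/-- For all integers `n > n' ≥ 1`, a single object of type `𝒯_{n,n'}` with
initial value `s` solves recoverable wait-free binary consensus among `n'` processes: the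
algorithm in which each process with input `x` (also after each crash) first applies `op_R`
and decides `v` if the response is `s_{v,i}`, decides 0 if the response is `⊥`, and otherwise
(response `s`) applies `op_x` and decides the value returned, satisfies agreement, validity
and recoverable wait-freedom in every execution with individual crashes; moreover, in every
execution of this algorithm no `op_R` operation ever returns `⊥`. -/
theorem recAlg_solves_recoverable_consensus
    (n n' : ℕ) (h1 : 1 ≤ n') (h2 : n' < n) (hn : 2 ≤ n) :
    SolvesRecConsensus (recAlg n n' hn) ∧
    ∀ (input : Fin n' → Bool) (σ τ : List (Event n')) (i : Fin n'),
      (τ ++ [Event.step i]) <+: σ →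
      (recAlg n n' hn).pending i
          ((run (recAlg n n' hn) input (initConfig (recAlg n n' hn) input) τ).pstate i) =
        some ⟨(), TOp.opR⟩ →
      ((TType n n' hn).δ
          ((run (recAlg n n' hn) input (initConfig (recAlg n n' hn) input) τ).oval ())
          TOp.opR).1 ≠ TResp.botR :=
  ⟨⟨recAlg_agreement h2, recAlg_validity h2, recAlg_recWaitFree h2⟩,
    fun _ _ τ _ _ _ => opR_run_ne_botR h2 τ⟩
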